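/- Let P be a shift-invariant measure on A^ℕ and K even. The strict inequality (1/K) H(P_K) > (1/2)((2/K) H(P_{K/2}) + h(P)) holds if and only if there exists n with K/2 < n ≤ K such that H(P_n) − H(P_{n−1}) > h(P); in particular the inequality holds whenever P is not a Markov measure of order ≤ K. -/

import Mathlib

open MeasureTheory Filter Finset

noncomputable section

variable {A : Type*}

def shift (x : ℕ → A) : ℕ → A := fun n => x (n + 1)

def cyl (x : ℕ → A) (n : ℕ) : Set (ℕ → A) := {y | ∀ i < n, y i = x i}

variable [MeasurableSpace A]

def Zf (P : Measure (ℕ → A)) (n : ℕ) (x : ℕ → A) : ℝ :=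
  (P (cyl (shift x) (n - 1))).toReal / (P (cyl x n)).toReal

def suppP (P : Measure (ℕ → A)) : Set (ℕ → A) := {x | ∀ n, 0 < P (cyl x n)}

def cylW {n : ℕ} (w : Fin n → A) : Set (ℕ → A) := {y | ∀ i : Fin n, y i.val = w i}

def Hn [Fintype A] (P : Measure (ℕ → A)) (n : ℕ) : ℝ :=
  ∑ w : Fin n → A, Real.negMulLog ((P (cylW w)).toReal)

def coordFiltration (A : Type*) [MeasurableSpace A] :
    Filtration ℕ (MeasurableSpace.pi : MeasurableSpace (ℕ → A)) where
  seq n := MeasurableSpace.comap (fun x : ℕ → A => fun i : Fin (n + 1) => x i) MeasurableSpace.pi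
  mono' := by
    intro m n hmn
    have h : (fun x : ℕ → A => fun i : Fin (m + 1) => x i)
        = (fun v : Fin (n + 1) → A => fun i : Fin (m + 1) => v (Fin.castLE (by omega) i))
          ∘ (fun x : ℕ → A => fun i : Fin (n + 1) => x i) := rfl
    show MeasurableSpace.comap _ _ ≤ MeasurableSpace.comap _ _
    rw [h, ← MeasurableSpace.comap_comp]
    exact MeasurableSpace.comap_mono
      ((measurable_pi_lambda _ (fun i => measurable_pi_apply _)).comap_le)
  le' := by
    intro n
    exact (measurable_pi_lambda _ (fun i => measurable_pi_apply i.val)).comap_le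

/-- `P` is a Markov measure of order `≤ m`: conditionally on the last `m` symbols,
the next symbol is independent of the more remote past (cross-multiplied form). -/
def IsMarkovOrderLe (P : Measure (ℕ → A)) (m : ℕ) : Prop :=
  ∀ x : ℕ → A, ∀ n : ℕ, m ≤ n →
    P (cyl x (n + 1)) * P (cyl (shift^[n - m] x) m)
      = P (cyl x n) * P (cyl (shift^[n - m] x) (m + 1))

/-!
The increments `β n = Hn P n - Hn P (n - 1)` decrease: by shift invariance `β n - β (n + 1)` is the
mutual information of the first and last of `n + 1` consecutive symbols given the ones in between,
hence nonnegative. Their Cesàro means `Hn P n / n` tend to `hent`, so `hent ≤ β n` for all `n`, and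
`Hn P K - Hn P m - (K - m) * hent` is the sum of the nonnegative gaps `β n - hent` over `m < n ≤ K`:
it is positive iff some gap is. If the gap at `K` vanishes then so do all later ones, and vanishing
mutual information is conditional independence, that is, the Markov property.

The letters of `A` need not be measurable. Collapsing the measurable atoms of `A` to points gives a
discrete alphabet on which the argument above runs. A word and its collapsed image have cylinders of
the same measure, so passing to the quotient can change `Hn` only if some word of probability
strictly between `0` and `1` has several preimages. By Jensen's inequality the expected number of
preimages of a random word would then grow exponentially in its length, which the finite limit of
`Hn P n / n` excludes.
-/

open InformationTheory

section Increments

variable {H : ℕ → ℝ} {h : ℝ}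

lemma le_add_mul_of_antitone_increments (hH : Antitone fun n => H (n + 1) - H n) (n k : ℕ) :
    H (n + k) ≤ H n + k * (H (n + 1) - H n) := by
  induction k with
  | zero => simp
  | succ k ih =>
    have hstep : H (n + k + 1) - H (n + k) ≤ H (n + 1) - H n := hH (Nat.le_add_right n k)
    rw [← add_assoc, Nat.cast_succ]
    linarith

lemma le_increment_of_tendsto_div (hH : Antitone fun n => H (n + 1) - H n)
    (hlim : Tendsto (fun n : ℕ => H n / n) atTop (nhds h)) (n : ℕ) : h ≤ H (n + 1) - H n := by
  set b := H (n + 1) - H n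
  have hbound : Tendsto (fun k : ℕ => (H n - n * b) / (k : ℝ) + b) atTop (nhds b) := by
    simpa using (tendsto_const_div_atTop_nhds_zero_nat (H n - n * b)).add_const b
  refine le_of_tendsto_of_tendsto hlim hbound ?_
  filter_upwards [eventually_ge_atTop n, eventually_gt_atTop 0] with k hnk hk
  obtain ⟨j, rfl⟩ := Nat.exists_eq_add_of_le hnk
  rw [div_add' _ _ _ (by positivity)]
  gcongr
  have := le_add_mul_of_antitone_increments hH n j
  push_cast
  linarith

lemma add_mul_lt_iff_exists_increment_gt (hge : ∀ n, h ≤ H (n + 1) - H n) {m K : ℕ}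
    (hmK : m ≤ K) :
    H m + (K - m) * h < H K ↔ ∃ n : ℕ, m < n ∧ n ≤ K ∧ h < H n - H (n - 1) := by
  have htelescope : H K - (H m + (K - m) * h) = ∑ n ∈ Ico m K, (H (n + 1) - H n - h) := by
    rw [sum_sub_distrib, sum_Ico_sub H hmK, sum_const, Nat.card_Ico, nsmul_eq_mul,
      Nat.cast_sub hmK]
    ring
  rw [← sub_pos, htelescope, sum_pos_iff_of_nonneg fun n _ => sub_nonneg.2 (hge n)]
  simp only [mem_Ico, sub_pos]
  constructor
  · rintro ⟨n, ⟨hmn, hnK⟩, hn⟩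
    exact ⟨n + 1, by omega, by omega, by simpa using hn⟩
  · rintro ⟨n, hmn, hnK, hn⟩
    refine ⟨n - 1, by omega, ?_⟩
    rwa [Nat.sub_add_cancel (by omega)]

end Increments

section MutualInfo

variable {α β : Type*} [Fintype α] [Fintype β] {f : α → β → ℝ}

/-- The mutual information of the two coordinates under the joint weights `f`. The total mass is
not required to be `1`, which is what its entropy term accounts for: the value is the total mass
times the mutual information of the normalized weights. -/
def mutualInfo (f : α → β → ℝ) : ℝ :=
  ∑ a, Real.negMulLog (∑ b, f a b) + ∑ b, Real.negMulLog (∑ a, f a b)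
    - Real.negMulLog (∑ a, ∑ b, f a b) - ∑ a, ∑ b, Real.negMulLog (f a b)

/-- The joint weights with the same marginals as `f` that make the two coordinates independent.
For `f = 0` they vanish, since `0 / 0 = 0`. -/
def independentWeights (f : α → β → ℝ) (a : α) (b : β) : ℝ :=
  (∑ b', f a b') * (∑ a', f a' b) / ∑ a', ∑ b', f a' b'

lemma independentWeights_nonneg (hf : ∀ a b, 0 ≤ f a b) (a : α) (b : β) :
    0 ≤ independentWeights f a b :=
  div_nonneg (mul_nonneg (sum_nonneg fun _ _ => hf _ _) (sum_nonneg fun _ _ => hf _ _))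
    (sum_nonneg fun _ _ => sum_nonneg fun _ _ => hf _ _)

lemma sum_independentWeights (f : α → β → ℝ) :
    ∑ a, ∑ b, independentWeights f a b = ∑ a, ∑ b, f a b := by
  simp only [independentWeights, ← sum_div, ← mul_sum, ← sum_mul]
  rw [sum_comm (f := fun b a => f a b), mul_self_div_self]

lemma marginals_pos (hf : ∀ a b, 0 ≤ f a b) {a : α} {b : β} (hab : 0 < f a b) :
    0 < ∑ b', f a b' ∧ 0 < ∑ a', f a' b ∧ 0 < ∑ a', ∑ b', f a' b' := by
  have hrow : 0 < ∑ b', f a b' := sum_pos' (fun b' _ => hf a b') ⟨b, mem_univ b, hab⟩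
  exact ⟨hrow, sum_pos' (fun a' _ => hf a' b) ⟨a, mem_univ a, hab⟩,
    sum_pos' (fun a' _ => sum_nonneg fun b' _ => hf a' b') ⟨a, mem_univ a, hrow⟩⟩

lemma independentWeights_mul_klFun (hf : ∀ a b, 0 ≤ f a b) (a : α) (b : β) :
    independentWeights f a b * klFun (f a b / independentWeights f a b)
      = f a b * Real.log (f a b) + f a b * Real.log (∑ a', ∑ b', f a' b')
        - f a b * Real.log (∑ b', f a b') - f a b * Real.log (∑ a', f a' b)
        + independentWeights f a b - f a b := by
  rcases (hf a b).eq_or_lt with h0 | hpos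
  · simp [← h0, klFun_zero]
  · obtain ⟨hrow, hcol, htotal⟩ := marginals_pos hf hpos
    have hr : 0 < independentWeights f a b := by unfold independentWeights; positivity
    have hlog : Real.log (independentWeights f a b) = Real.log (∑ b', f a b')
        + Real.log (∑ a', f a' b) - Real.log (∑ a', ∑ b', f a' b') := by
      rw [independentWeights, Real.log_div (by positivity) htotal.ne',
        Real.log_mul hrow.ne' hcol.ne']
    rw [klFun_apply, Real.log_div hpos.ne' hr.ne', hlog]
    field_simp
    ring

lemma mutualInfo_eq_sum_klFun (hf : ∀ a b, 0 ≤ f a b) :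
    mutualInfo f = ∑ a, ∑ b,
      independentWeights f a b * klFun (f a b / independentWeights f a b) := by
  have hcol : ∑ a, ∑ b, f a b * Real.log (∑ a', f a' b)
      = ∑ b, (∑ a, f a b) * Real.log (∑ a, f a b) := by
    rw [sum_comm]
    simp only [sum_mul]
  simp only [independentWeights_mul_klFun hf, sum_add_distrib, sum_sub_distrib, hcol,
    sum_independentWeights]
  simp only [mutualInfo, Real.negMulLog, neg_mul, sum_neg_distrib, ← sum_mul]
  ring

lemma independentWeights_mul_klFun_nonneg (hf : ∀ a b, 0 ≤ f a b) (a : α) (b : β) :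
    0 ≤ independentWeights f a b * klFun (f a b / independentWeights f a b) :=
  have hr := independentWeights_nonneg hf a b
  mul_nonneg hr (klFun_nonneg (div_nonneg (hf a b) hr))

lemma mutualInfo_nonneg (hf : ∀ a b, 0 ≤ f a b) : 0 ≤ mutualInfo f := by
  rw [mutualInfo_eq_sum_klFun hf]
  exact sum_nonneg fun a _ => sum_nonneg fun b _ => independentWeights_mul_klFun_nonneg hf a b

lemma eq_independentWeights_of_mutualInfo_eq_zero (hf : ∀ a b, 0 ≤ f a b)
    (h0 : mutualInfo f = 0) (a : α) (b : β) : f a b = independentWeights f a b := by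
  have hterm := independentWeights_mul_klFun_nonneg hf
  have hzero : independentWeights f a b * klFun (f a b / independentWeights f a b) = 0 := by
    rw [mutualInfo_eq_sum_klFun hf,
      sum_eq_zero_iff_of_nonneg fun a _ => sum_nonneg fun b _ => hterm a b] at h0
    exact (sum_eq_zero_iff_of_nonneg fun b _ => hterm a b).1 (h0 a (mem_univ a)) b (mem_univ b)
  rcases (hf a b).eq_or_lt with hfab | hpos
  · simpa [← hfab, klFun_zero, eq_comm] using hzero
  · obtain ⟨hrow, hcol, htotal⟩ := marginals_pos hf hpos
    have hr : 0 < independentWeights f a b := by unfold independentWeights; positivity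
    have hkl := (mul_eq_zero.1 hzero).resolve_left hr.ne'
    exact (div_eq_one_iff_eq hr.ne').1 ((klFun_eq_zero_iff (by positivity)).1 hkl)

lemma mul_sum_eq_of_mutualInfo_eq_zero (hf : ∀ a b, 0 ≤ f a b) (h0 : mutualInfo f = 0)
    (a : α) (b : β) :
    f a b * ∑ a', ∑ b', f a' b' = (∑ b', f a b') * ∑ a', f a' b := by
  rcases eq_or_ne (∑ a', ∑ b', f a' b') 0 with htotal | htotal
  · have hrow : ∑ b', f a b' = 0 :=
      (sum_eq_zero_iff_of_nonneg fun a _ => sum_nonneg fun b _ => hf a b).1 htotal a (mem_univ a)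
    rw [htotal, hrow, mul_zero, zero_mul]
  · rw [eq_independentWeights_of_mutualInfo_eq_zero hf h0 a b, independentWeights,
      div_mul_cancel₀ _ htotal]

end MutualInfo

section Cylinders

variable {B : Type*}

lemma shift_iterate_apply (k : ℕ) (x : ℕ → B) (i : ℕ) : shift^[k] x i = x (i + k) := by
  induction k generalizing x with
  | zero => rfl
  | succ k ih =>
    rw [Function.iterate_succ_apply, ih]
    rfl

/-- The word of length `n` at the beginning of the sequence `x`. -/
def prefixWord (n : ℕ) (x : ℕ → B) : Fin n → B := fun i => x i

lemma cyl_eq_cylW (x : ℕ → B) (n : ℕ) : cyl x n = cylW (prefixWord n x) := by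
  ext y
  simp [cyl, cylW, prefixWord, Fin.forall_iff]

lemma cylW_eq_preimage_prefixWord {n : ℕ} (w : Fin n → B) : cylW w = prefixWord n ⁻¹' {w} := by
  ext y
  simp [cylW, prefixWord, funext_iff]

lemma prefixWord_succ_eq_cons (n : ℕ) (x : ℕ → B) :
    prefixWord (n + 1) x = Fin.cons (x 0) (prefixWord n (shift x)) := by
  ext i
  refine Fin.cases rfl (fun i => ?_) i
  simp [prefixWord, shift]

lemma prefixWord_succ_eq_snoc (n : ℕ) (x : ℕ → B) :
    prefixWord (n + 1) x = Fin.snoc (prefixWord n x) (x n) := by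
  ext i
  refine Fin.lastCases (by simp [prefixWord]) (fun i => ?_) i
  simp [prefixWord]

lemma cyl_succ_subset (x : ℕ → B) (n : ℕ) : cyl x (n + 1) ⊆ cyl x n :=
  fun _ hy i hi => hy i (by omega)

lemma cyl_succ_subset_preimage_shift (x : ℕ → B) (n : ℕ) :
    cyl x (n + 1) ⊆ shift ⁻¹' cyl (shift x) n :=
  fun _ hy i hi => hy (i + 1) (by omega)

lemma cylW_eq_iUnion_snoc {n : ℕ} (w : Fin n → B) :
    cylW w = ⋃ a, cylW (Fin.snoc w a : Fin (n + 1) → B) := by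
  ext y
  simp [cylW, Fin.forall_fin_succ']

lemma preimage_shift_cylW_eq_iUnion_cons {n : ℕ} (w : Fin n → B) :
    shift ⁻¹' cylW w = ⋃ a, cylW (Fin.cons a w : Fin (n + 1) → B) := by
  ext y
  simp [cylW, shift, Fin.forall_fin_succ]

lemma disjoint_cylW {n : ℕ} {v w : Fin n → B} (hvw : v ≠ w) : Disjoint (cylW v) (cylW w) := by
  simp only [cylW_eq_preimage_prefixWord]
  exact Disjoint.preimage _ (Set.disjoint_singleton.2 hvw)

lemma sum_eq_sum_cons [Fintype B] {M : Type*} [AddCommMonoid M] (n : ℕ)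
    (F : (Fin (n + 1) → B) → M) :
    ∑ w, F w = ∑ w : Fin n → B, ∑ a, F (Fin.cons a w) := by
  rw [← (Fin.consEquiv fun _ => B).sum_comp, Fintype.sum_prod_type_right]
  rfl

lemma sum_eq_sum_snoc [Fintype B] {M : Type*} [AddCommMonoid M] (n : ℕ)
    (F : (Fin (n + 1) → B) → M) :
    ∑ w, F w = ∑ w : Fin n → B, ∑ a, F (Fin.snoc w a) := by
  rw [← (Fin.snocEquiv fun _ => B).sum_comp, Fintype.sum_prod_type_right]
  rfl

end Cylinders

section DiscreteAlphabet

/-- The joint weights of the symbols surrounding an occurrence of the word `w`. -/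
def surroundingWeights (P : Measure (ℕ → A)) {n : ℕ} (w : Fin n → A) (a b : A) : ℝ :=
  P.real (cylW (Fin.cons a (Fin.snoc w b : Fin (n + 1) → A) : Fin (n + 2) → A))

lemma mutualInfo_surroundingWeights_nonneg [Fintype A] (P : Measure (ℕ → A)) {n : ℕ}
    (w : Fin n → A) :
    0 ≤ mutualInfo (surroundingWeights P w) :=
  mutualInfo_nonneg fun _ _ => measureReal_nonneg

lemma measurable_prefixWord (n : ℕ) :
    Measurable (prefixWord n : (ℕ → A) → Fin n → A) :=
  measurable_pi_lambda _ fun _ => measurable_pi_apply _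

lemma measurableSet_cylW [MeasurableSingletonClass A] {n : ℕ}
    (w : Fin n → A) : MeasurableSet (cylW w) := by
  rw [cylW_eq_preimage_prefixWord]
  exact measurable_prefixWord n (measurableSet_singleton w)

variable [MeasurableSingletonClass A] {P : Measure (ℕ → A)} [IsFiniteMeasure P]

lemma measureReal_cyl_succ_eq_zero (hinv : MeasurePreserving shift P P) {x : ℕ → A} {n : ℕ}
    (h0 : P.real (cyl (shift x) n) = 0) : P.real (cyl x (n + 1)) = 0 := by
  refine measureReal_mono_null (cyl_succ_subset_preimage_shift x n) ?_
  rw [cyl_eq_cylW] at h0 ⊢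
  rwa [hinv.measureReal_preimage (measurableSet_cylW _).nullMeasurableSet]

lemma isMarkovOrderLe_of_measureReal_cyl_mul (hinv : MeasurePreserving shift P P) {m : ℕ}
    (hindep : ∀ n, m ≤ n → ∀ x, P.real (cyl x (n + 2)) * P.real (cyl (shift x) n)
      = P.real (cyl x (n + 1)) * P.real (cyl (shift x) (n + 1))) :
    IsMarkovOrderLe P m := by
  intro x n hn
  rw [← ENNReal.toReal_eq_toReal_iff' (by finiteness) (by finiteness), ENNReal.toReal_mul,
    ENNReal.toReal_mul]
  simp only [← Measure.real_def]
  induction n, hn using Nat.le_induction generalizing x with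
  | base => simp [mul_comm]
  | succ n hn ih =>
    rw [Nat.succ_sub hn, Function.iterate_succ_apply]
    rcases eq_or_ne (P.real (cyl (shift x) n)) 0 with h0 | h0
    · have hx := measureReal_cyl_succ_eq_zero hinv h0
      rw [hx, measureReal_mono_null (cyl_succ_subset x (n + 1)) hx, zero_mul, zero_mul]
    · apply mul_right_cancel₀ h0
      linear_combination P.real (cyl (shift^[n - m] (shift x)) m) * hindep n hn x
        + P.real (cyl x (n + 1)) * ih (shift x)

variable [Fintype A]

lemma sum_measureReal_cylW_snoc {n : ℕ} (w : Fin n → A) :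
    ∑ a, P.real (cylW (Fin.snoc w a : Fin (n + 1) → A)) = P.real (cylW w) := by
  rw [cylW_eq_iUnion_snoc, measureReal_iUnion_fintype (fun a b hab => disjoint_cylW ?_)
    fun _ => measurableSet_cylW _]
  exact fun h => hab (Fin.snoc_right_injective (α := fun _ => A) w h)

lemma sum_measureReal_cylW_cons (hinv : MeasurePreserving shift P P) {n : ℕ} (w : Fin n → A) :
    ∑ a, P.real (cylW (Fin.cons a w : Fin (n + 1) → A)) = P.real (cylW w) := by
  rw [← hinv.measureReal_preimage (measurableSet_cylW w).nullMeasurableSet,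
    preimage_shift_cylW_eq_iUnion_cons,
    measureReal_iUnion_fintype (fun a b hab => disjoint_cylW ?_) fun _ => measurableSet_cylW _]
  exact fun h => hab (Fin.cons_left_injective (α := fun _ => A) w h)

lemma sum_right_surroundingWeights {n : ℕ} (w : Fin n → A) (a : A) :
    ∑ b, surroundingWeights P w a b = P.real (cylW (Fin.cons a w : Fin (n + 1) → A)) := by
  simp only [surroundingWeights, Fin.cons_snoc_eq_snoc_cons]
  exact sum_measureReal_cylW_snoc _

lemma sum_left_surroundingWeights (hinv : MeasurePreserving shift P P) {n : ℕ} (w : Fin n → A)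
    (b : A) :
    ∑ a, surroundingWeights P w a b = P.real (cylW (Fin.snoc w b : Fin (n + 1) → A)) :=
  sum_measureReal_cylW_cons hinv _

lemma sum_mutualInfo_surroundingWeights (hinv : MeasurePreserving shift P P) (n : ℕ) :
    ∑ w : Fin n → A, mutualInfo (surroundingWeights P w)
      = (Hn P (n + 1) - Hn P n) - (Hn P (n + 2) - Hn P (n + 1)) := by
  have hcons : Hn P (n + 1) = ∑ w : Fin n → A, ∑ a,
      Real.negMulLog (P.real (cylW (Fin.cons a w : Fin (n + 1) → A))) := sum_eq_sum_cons n _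
  have hsnoc : Hn P (n + 1) = ∑ w : Fin n → A, ∑ b,
      Real.negMulLog (P.real (cylW (Fin.snoc w b : Fin (n + 1) → A))) := sum_eq_sum_snoc n _
  have hboth : Hn P (n + 2) = ∑ w : Fin n → A, ∑ a, ∑ b,
      Real.negMulLog (surroundingWeights P w a b) := by
    rw [Hn, sum_eq_sum_cons, sum_eq_sum_snoc]
    exact sum_congr rfl fun w _ => sum_comm
  have hmiddle : Hn P n = ∑ w : Fin n → A, Real.negMulLog (P.real (cylW w)) := rfl
  simp only [mutualInfo, sum_right_surroundingWeights, sum_left_surroundingWeights hinv,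
    sum_measureReal_cylW_cons hinv, sum_sub_distrib, sum_add_distrib]
  rw [← hcons, ← hsnoc, ← hboth, ← hmiddle]
  ring

lemma antitone_increment_Hn (hinv : MeasurePreserving shift P P) :
    Antitone fun n => Hn P (n + 1) - Hn P n :=
  antitone_nat_of_succ_le fun n => by
    rw [← sub_nonneg, ← sum_mutualInfo_surroundingWeights hinv n]
    exact sum_nonneg fun w _ => mutualInfo_surroundingWeights_nonneg P w

lemma measureReal_cyl_mul_of_increment_eq (hinv : MeasurePreserving shift P P) {n : ℕ}
    (hn : Hn P (n + 2) - Hn P (n + 1) = Hn P (n + 1) - Hn P n) (x : ℕ → A) :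
    P.real (cyl x (n + 2)) * P.real (cyl (shift x) n)
      = P.real (cyl x (n + 1)) * P.real (cyl (shift x) (n + 1)) := by
  have hsum : ∑ w : Fin n → A, mutualInfo (surroundingWeights P w) = 0 := by
    rw [sum_mutualInfo_surroundingWeights hinv, hn, sub_self]
  have hzero : mutualInfo (surroundingWeights P (prefixWord n (shift x))) = 0 :=
    (sum_eq_zero_iff_of_nonneg fun w _ => mutualInfo_surroundingWeights_nonneg P w).1 hsum _
      (mem_univ _)
  have hprod := mul_sum_eq_of_mutualInfo_eq_zero
    (f := surroundingWeights P (prefixWord n (shift x))) (fun _ _ => measureReal_nonneg) hzero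
    (x 0) (shift x n)
  rw [sum_left_surroundingWeights hinv, sum_right_surroundingWeights] at hprod
  simp only [sum_right_surroundingWeights, sum_measureReal_cylW_cons hinv] at hprod
  simpa only [surroundingWeights, ← prefixWord_succ_eq_snoc, ← prefixWord_succ_eq_cons,
    ← cyl_eq_cylW] using hprod

lemma isMarkovOrderLe_of_forall_increment_eq (hinv : MeasurePreserving shift P P) {m : ℕ}
    (hconst : ∀ n, m ≤ n → Hn P (n + 2) - Hn P (n + 1) = Hn P (n + 1) - Hn P n) :
    IsMarkovOrderLe P m :=
  isMarkovOrderLe_of_measureReal_cyl_mul hinv fun n hn =>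
    measureReal_cyl_mul_of_increment_eq hinv (hconst n hn)

end DiscreteAlphabet

section SuperlinearGrowth

lemma mul_neg_log_le_negMulLog {x t : ℝ} (hx : 0 ≤ x) (hxt : x ≤ t) :
    x * -Real.log t ≤ Real.negMulLog x := by
  rcases hx.eq_or_lt with rfl | hpos
  · simp
  · rw [Real.negMulLog, neg_mul, mul_neg, neg_le_neg_iff]
    gcongr

lemma integral_eval_eq_of_shift_invariant {P : Measure (ℕ → A)}
    (hinv : MeasurePreserving shift P P) {g : A → ℝ} (hg : Measurable g) (i : ℕ) :
    ∫ x, g (x i) ∂P = ∫ x, g (x 0) ∂P := by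
  have hmeas : Measurable fun x : ℕ → A => g (x 0) := hg.comp (measurable_pi_apply 0)
  rw [← (hinv.iterate i).map_eq, integral_map (hinv.iterate i).measurable.aemeasurable
    hmeas.aestronglyMeasurable, (hinv.iterate i).map_eq]
  simp only [shift_iterate_apply, zero_add]

variable [MeasurableSingletonClass A] {P : Measure (ℕ → A)}

lemma measureReal_cylW_le_max [IsProbabilityMeasure P] {k n : ℕ} (hkn : k ≤ n) (v : Fin k → A)
    (u : Fin n → A) :
    P.real (cylW u) ≤ max (P.real (cylW v)) (1 - P.real (cylW v)) := by
  rw [← probReal_compl_eq_one_sub (measurableSet_cylW v)]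
  let p : Fin k → A := fun i => u (Fin.castLE hkn i)
  have hup : cylW u ⊆ cylW p := fun y hy i => hy (Fin.castLE hkn i)
  rcases eq_or_ne p v with hpv | hpv
  · exact le_max_of_le_left (measureReal_mono (hpv ▸ hup))
  · exact le_max_of_le_right (measureReal_mono (hup.trans (disjoint_cylW hpv).subset_compl_right))

lemma integral_log_pos [Finite A] [IsFiniteMeasure P] (hinv : MeasurePreserving shift P P)
    {c : A → ℝ} (hc : ∀ a, 1 ≤ c a) {k : ℕ} {v : Fin k → A} (hv : 0 < P.real (cylW v))
    {i : Fin k} (hi : 1 < c (v i)) :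
    0 < ∫ x, Real.log (c (x 0)) ∂P := by
  have hmeas := measurable_of_finite fun a => Real.log (c a)
  have hint : Integrable (fun x : ℕ → A => Real.log (c (x i))) P :=
    (Integrable.of_finite (f := fun a => Real.log (c a))).comp_measurable (measurable_pi_apply _)
  rw [← integral_eval_eq_of_shift_invariant hinv hmeas i,
    integral_pos_iff_support_of_nonneg (f := fun x : ℕ → A => Real.log (c (x i)))
      (fun x => Real.log_nonneg (hc (x i))) hint]
  refine (ENNReal.toReal_pos_iff.1 hv).1.trans_le (measure_mono fun x hx => ?_)
  rw [Function.mem_support, hx i]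
  exact (Real.log_pos hi).ne'

variable [Fintype A]

lemma integral_prefixWord [IsFiniteMeasure P] {n : ℕ} (F : (Fin n → A) → ℝ) :
    ∫ x, F (prefixWord n x) ∂P = ∑ w, P.real (cylW w) * F w := by
  have hmap := measurable_prefixWord (A := A) n
  rw [← integral_map hmap.aemeasurable (measurable_of_finite F).aestronglyMeasurable,
    integral_fintype Integrable.of_finite]
  refine sum_congr rfl fun w _ => ?_
  rw [map_measureReal_apply hmap (measurableSet_singleton w), cylW_eq_preimage_prefixWord,
    smul_eq_mul]

variable [IsProbabilityMeasure P]

lemma exp_mul_integral_log_le_sum (hinv : MeasurePreserving shift P P) {c : A → ℝ}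
    (hc : ∀ a, 0 < c a) (n : ℕ) :
    Real.exp ((∫ x, Real.log (c (x 0)) ∂P) * n)
      ≤ ∑ u : Fin n → A, P.real (cylW u) * ∏ i, c (u i) := by
  have hint : ∀ F : (Fin n → A) → ℝ, Integrable (fun x => F (prefixWord n x)) P := fun F =>
    Integrable.of_finite.comp_measurable (measurable_prefixWord n)
  have hlog : ∫ x, ∑ i, Real.log (c (prefixWord n x i)) ∂P
      = (∫ x, Real.log (c (x 0)) ∂P) * n := by
    rw [integral_finsetSum _ fun i _ => hint fun u => Real.log (c (u i))]
    simp only [prefixWord, integral_eval_eq_of_shift_invariant hinv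
      (measurable_of_finite fun a => Real.log (c a)), sum_const, card_univ, Fintype.card_fin,
      nsmul_eq_mul, mul_comm]
  rw [← hlog, ← integral_prefixWord fun u => ∏ i, c (u i)]
  refine (convexOn_exp.map_integral_le Real.continuous_exp.continuousOn isClosed_univ (by simp)
    (hint fun u => ∑ i, Real.log (c (u i)))
    (hint fun u => Real.exp (∑ i, Real.log (c (u i))))).trans_eq ?_
  simp only [Real.exp_sum, Real.exp_log (hc _)]

lemma tendsto_sum_prod_mul_negMulLog_div_atTop (hinv : MeasurePreserving shift P P) {c : A → ℝ}
    (hc : ∀ a, 1 ≤ c a) {k : ℕ} {v : Fin k → A} (hv0 : 0 < P.real (cylW v))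
    (hv1 : P.real (cylW v) < 1) {i : Fin k} (hi : 1 < c (v i)) :
    Tendsto (fun n : ℕ =>
      (∑ u : Fin n → A, (∏ j, c (u j)) * Real.negMulLog (P.real (cylW u))) / n) atTop atTop := by
  set t := max (P.real (cylW v)) (1 - P.real (cylW v))
  have ht : 0 < -Real.log t :=
    neg_pos.2 (Real.log_neg (lt_max_of_lt_left hv0) (max_lt hv1 (by linarith)))
  have hexp : Tendsto (fun n : ℕ =>
      -Real.log t * (Real.exp ((∫ x, Real.log (c (x 0)) ∂P) * n) / n)) atTop atTop := by
    simpa using ((tendsto_exp_mul_div_rpow_atTop 1 _ (integral_log_pos hinv hc hv0 hi)).comp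
      tendsto_natCast_atTop_atTop).const_mul_atTop ht
  refine tendsto_atTop_mono' _ ?_ hexp
  filter_upwards [eventually_ge_atTop k] with n hkn
  rw [← mul_div_assoc]
  gcongr
  calc -Real.log t * Real.exp ((∫ x, Real.log (c (x 0)) ∂P) * n)
      ≤ -Real.log t * ∑ u : Fin n → A, P.real (cylW u) * ∏ j, c (u j) := by
        gcongr
        exact exp_mul_integral_log_le_sum hinv (fun a => one_pos.trans_le (hc a)) n
    _ = ∑ u : Fin n → A, (∏ j, c (u j)) * (P.real (cylW u) * -Real.log t) := by
        rw [mul_sum]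
        exact sum_congr rfl fun u _ => by ring
    _ ≤ ∑ u : Fin n → A, (∏ j, c (u j)) * Real.negMulLog (P.real (cylW u)) := by
        gcongr with u
        · exact prod_nonneg fun j _ => zero_le_one.trans (hc (u j))
        · exact mul_neg_log_le_negMulLog measureReal_nonneg (measureReal_cylW_le_max hkn v u)

end SuperlinearGrowth

section LetterFactor

lemma map_image_eq_of_eq_comap {α β : Type*} [mα : MeasurableSpace α] [mβ : MeasurableSpace β]
    {f : α → β} (hf : mα = mβ.comap f) (μ : Measure α) (s : Set α) :
    μ.map f (f '' s) = μ s := by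
  have hmeas : Measurable f := measurable_iff_comap_le.2 hf.ge
  apply le_antisymm
  · obtain ⟨t, ht, hpre⟩ : MeasurableSet[mβ.comap f] (toMeasurable μ s) :=
      hf ▸ measurableSet_toMeasurable μ s
    calc μ.map f (f '' s) ≤ μ.map f t :=
          measure_mono (Set.image_subset_iff.2 (hpre ▸ subset_toMeasurable μ s))
      _ = μ s := by rw [Measure.map_apply hmeas ht, hpre, measure_toMeasurable]
  · calc μ s ≤ μ (f ⁻¹' (f '' s)) := measure_mono (Set.subset_preimage_image f s)
      _ ≤ μ.map f (f '' s) := Measure.le_map_apply hmeas.aemeasurable _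

lemma measurableSpace_pi_eq_comap_comp {ι α β : Type*} [mα : MeasurableSpace α]
    [mβ : MeasurableSpace β] {π : α → β} (hπ : mα = mβ.comap π) :
    (MeasurableSpace.pi : MeasurableSpace (ι → α)) = MeasurableSpace.pi.comap (π ∘ ·) := by
  simp only [MeasurableSpace.pi, hπ, MeasurableSpace.comap_iSup, MeasurableSpace.comap_comp]
  rfl

lemma image_comp_cylW {α β : Type*} {π : α → β} (hπ : Function.Surjective π) {n : ℕ}
    (w : Fin n → α) : (π ∘ ·) '' cylW w = cylW (π ∘ w) := by
  ext z
  constructor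
  · rintro ⟨y, hy, rfl⟩ i
    exact congrArg π (hy i)
  · intro hz
    refine ⟨fun i => if h : i < n then w ⟨i, h⟩ else Function.surjInv hπ (z i),
      fun i => by simp, funext fun i => ?_⟩
    by_cases h : i < n
    · simpa [h] using (hz ⟨i, h⟩).symm
    · simp [h, Function.surjInv_eq hπ]

lemma sum_comp_eq_sum_prod_card_fiber {α β ι : Type*} [Fintype α] [Fintype β] [DecidableEq β]
    [Fintype ι] [DecidableEq ι] (π : α → β) (F : (ι → β) → ℝ) :
    ∑ w : ι → α, F (π ∘ w) = ∑ v, (∏ i, (#{a | π a = v i} : ℝ)) * F v := by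
  rw [← sum_fiberwise univ (π ∘ ·)]
  refine sum_congr rfl fun v _ => ?_
  have hfiber : ({w | π ∘ w = v} : Finset (ι → α))
      = Fintype.piFinset fun i => {a | π a = v i} := by
    ext w
    simp [funext_iff]
  rw [sum_congr rfl fun w hw => congrArg F (mem_filter.1 hw).2, sum_const, hfiber,
    Fintype.card_piFinset, nsmul_eq_mul, Nat.cast_prod]

variable {B : Type*} [mB : MeasurableSpace B] {π : A → B} {P : Measure (ℕ → A)}

lemma measurable_comp_letters (hπ : Measurable π) :
    Measurable (fun x : ℕ → A => π ∘ x) :=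
  measurable_pi_lambda _ fun i => hπ.comp (measurable_pi_apply i)

lemma measurePreserving_shift_map_comp (hπ : Measurable π)
    (hinv : MeasurePreserving shift P P) :
    MeasurePreserving shift (P.map (π ∘ ·)) (P.map (π ∘ ·)) :=
  ((measurable_comp_letters hπ).measurePreserving P).of_semiconj hinv (fun _ => rfl)
    (measurable_pi_lambda _ fun i => measurable_pi_apply (i + 1))

lemma map_comp_cylW (hπcomap : ‹MeasurableSpace A› = mB.comap π) (hπ : Function.Surjective π)
    {n : ℕ} (w : Fin n → A) : P.map (π ∘ ·) (cylW (π ∘ w)) = P (cylW w) := by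
  rw [← image_comp_cylW hπ, map_image_eq_of_eq_comap (measurableSpace_pi_eq_comap_comp hπcomap)]

lemma isMarkovOrderLe_of_map_comp (hπcomap : ‹MeasurableSpace A› = mB.comap π)
    (hπ : Function.Surjective π) {m : ℕ} (hm : IsMarkovOrderLe (P.map (π ∘ ·)) m) :
    IsMarkovOrderLe P m := by
  have hcyl (x : ℕ → A) (n : ℕ) : P.map (π ∘ ·) (cyl (π ∘ x) n) = P (cyl x n) := by
    simp only [cyl_eq_cylW]
    exact map_comp_cylW hπcomap hπ (prefixWord n x)
  have hshift (x : ℕ → A) (k : ℕ) : shift^[k] (π ∘ x) = π ∘ shift^[k] x := by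
    ext i
    simp only [Function.comp_apply, shift_iterate_apply]
  intro x n hmn
  simpa only [hshift, hcyl] using hm (π ∘ x) n hmn

variable [Fintype A] [Fintype B]

lemma Hn_eq_sum_prod_card_fiber [DecidableEq B]
    (hπcomap : ‹MeasurableSpace A› = mB.comap π) (hπ : Function.Surjective π) (n : ℕ) :
    Hn P n = ∑ v : Fin n → B, (∏ i, (#{a | π a = v i} : ℝ))
      * Real.negMulLog ((P.map (π ∘ ·)).real (cylW v)) := by
  rw [← sum_comp_eq_sum_prod_card_fiber π
    fun v => Real.negMulLog ((P.map (π ∘ ·)).real (cylW v))]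
  simp only [measureReal_def, map_comp_cylW hπcomap hπ]
  rfl

lemma Hn_map_comp_eq [MeasurableSingletonClass B] [IsProbabilityMeasure P]
    (hπcomap : ‹MeasurableSpace A› = mB.comap π) (hπ : Function.Surjective π)
    (hinv : MeasurePreserving shift P P) {h : ℝ}
    (hlim : Tendsto (fun n : ℕ => Hn P n / n) atTop (nhds h)) (n : ℕ) :
    Hn (P.map (π ∘ ·)) n = Hn P n := by
  classical
  have hmeas : Measurable π := measurable_iff_comap_le.2 hπcomap.ge
  have := Measure.isProbabilityMeasure_map (μ := P) (measurable_comp_letters hmeas).aemeasurable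
  have hcard (b : B) : (1 : ℝ) ≤ #{a | π a = b} := by
    obtain ⟨a, rfl⟩ := hπ b
    exact_mod_cast card_pos.2 ⟨a, by simp⟩
  rw [Hn_eq_sum_prod_card_fiber hπcomap hπ]
  refine sum_congr rfl fun v _ => ?_
  by_contra hne
  have hη : Real.negMulLog ((P.map (π ∘ ·)).real (cylW v)) ≠ 0 := fun h0 => by
    simp only [measureReal_def] at h0 hne
    simp [h0] at hne
  obtain ⟨i, hi⟩ : ∃ i, 1 < (#{a | π a = v i} : ℝ) := by
    by_contra! hle
    refine hne ?_
    simp only [fun i => (hle i).antisymm (hcard (v i)), prod_const_one, one_mul, measureReal_def]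
  have hv0 : (P.map (π ∘ ·)).real (cylW v) ≠ 0 := fun h0 => hη (by simp [h0])
  have hv1 : (P.map (π ∘ ·)).real (cylW v) ≠ 1 := fun h1 => hη (by simp [h1])
  refine not_tendsto_nhds_of_tendsto_atTop ?_ h hlim
  simp only [Hn_eq_sum_prod_card_fiber hπcomap hπ]
  exact tendsto_sum_prod_mul_negMulLog_div_atTop (measurePreserving_shift_map_comp hmeas hinv)
    (c := fun b => (#{a | π a = b} : ℝ)) hcard (measureReal_nonneg.lt_of_ne' hv0)
    (measureReal_le_one.lt_of_ne hv1) hi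

end LetterFactor

section AtomQuotient

/-- Two letters are related when no measurable set separates them, that is, when they lie in the
same measurable atom. -/
def atomSetoid (A : Type*) [MeasurableSpace A] : Setoid A := Setoid.ker measurableAtom

/-- The alphabet with the letters of each measurable atom identified, which is what a measure can
tell apart. -/
def AtomQuotient (A : Type*) [MeasurableSpace A] : Type _ := Quotient (atomSetoid A)

namespace AtomQuotient

/-- The atom of a letter. -/
def mk (a : A) : AtomQuotient A := Quotient.mk (atomSetoid A) a

lemma mk_surjective : Function.Surjective (mk : A → AtomQuotient A) := Quotient.mk_surjective

lemma mk_eq_mk_iff {a b : A} : mk a = mk b ↔ measurableAtom a = measurableAtom b := Quotient.eq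

instance : MeasurableSpace (AtomQuotient A) := MeasurableSpace.map mk inferInstance

lemma measurable_mk : Measurable (mk : A → AtomQuotient A) := Measurable.of_le_map le_rfl

lemma preimage_mk_singleton (a : A) : mk ⁻¹' {mk a} = measurableAtom a := by
  ext b
  simp only [Set.mem_preimage, Set.mem_singleton_iff, mk_eq_mk_iff]
  exact ⟨fun hab => hab ▸ mem_measurableAtom_self b, measurableAtom_eq_of_mem⟩

instance [Countable A] : MeasurableSingletonClass (AtomQuotient A) where
  measurableSet_singleton q := by
    obtain ⟨a, rfl⟩ := mk_surjective q
    change MeasurableSet (mk ⁻¹' {mk a})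
    rw [preimage_mk_singleton]
    exact MeasurableSet.measurableAtom_of_countable a

instance [Finite A] : Finite (AtomQuotient A) := Quotient.finite _

lemma comap_mk : MeasurableSpace.comap mk inferInstance = ‹MeasurableSpace A› := by
  refine le_antisymm MeasurableSpace.comap_map_le fun s hs => ?_
  have hsat : mk ⁻¹' (mk '' s) = s := by
    refine (Set.subset_preimage_image mk s).antisymm' ?_
    rintro b ⟨a, ha, hab⟩
    exact measurableAtom_subset hs ha (mk_eq_mk_iff.1 hab ▸ mem_measurableAtom_self b)
  refine ⟨mk '' s, ?_, hsat⟩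
  change MeasurableSet (mk ⁻¹' (mk '' s))
  rwa [hsat]

end AtomQuotient

end AtomQuotient

section EntropyRate

variable [Fintype A] {P : Measure (ℕ → A)} [IsProbabilityMeasure P] {h : ℝ}

lemma antitone_increment_Hn_of_tendsto (hinv : MeasurePreserving shift P P)
    (hlim : Tendsto (fun n : ℕ => Hn P n / n) atTop (nhds h)) :
    Antitone fun n => Hn P (n + 1) - Hn P n := by
  have := Fintype.ofFinite (AtomQuotient A)
  simp only [← Hn_map_comp_eq AtomQuotient.comap_mk.symm AtomQuotient.mk_surjective hinv hlim]
  exact antitone_increment_Hn (measurePreserving_shift_map_comp AtomQuotient.measurable_mk hinv)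

lemma isMarkovOrderLe_of_increment_le (hinv : MeasurePreserving shift P P)
    (hlim : Tendsto (fun n : ℕ => Hn P n / n) atTop (nhds h)) {m : ℕ}
    (hm : Hn P (m + 1) - Hn P m ≤ h) : IsMarkovOrderLe P m := by
  have := Fintype.ofFinite (AtomQuotient A)
  have hanti := antitone_increment_Hn_of_tendsto hinv hlim
  have hconst (n : ℕ) (hn : m ≤ n) : Hn P (n + 1) - Hn P n = h :=
    ((hanti hn).trans hm).antisymm (le_increment_of_tendsto_div hanti hlim n)
  have hcomap := (AtomQuotient.comap_mk (A := A)).symm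
  refine isMarkovOrderLe_of_map_comp hcomap AtomQuotient.mk_surjective
    (isMarkovOrderLe_of_forall_increment_eq
      (measurePreserving_shift_map_comp AtomQuotient.measurable_mk hinv) fun n hn => ?_)
  simp only [Hn_map_comp_eq hcomap AtomQuotient.mk_surjective hinv hlim]
  rw [hconst n hn, hconst (n + 1) (hn.trans n.le_succ)]

end EntropyRate

lemma two_div_mul_add_div_two_lt_div_iff {K : ℕ} (hK : 0 < K) (hKeven : Even K) (a b h : ℝ) :
    (2 / (K : ℝ) * a + h) / 2 < b / K ↔ a + (K - (K / 2 : ℕ)) * h < b := by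
  have hK' : (0 : ℝ) < K := by exact_mod_cast hK
  rw [Nat.cast_div hKeven.two_dvd two_ne_zero, lt_div_iff₀ hK']
  have hscale : (2 / (K : ℝ) * a + h) / 2 * K = a + (K - K / (2 : ℕ)) * h := by
    field_simp
    push_cast
    ring
  rw [hscale]

theorem stmt17_general [Fintype A] (P : Measure (ℕ → A)) [IsProbabilityMeasure P]
    (hinv : MeasurePreserving (shift : (ℕ → A) → (ℕ → A)) P P) {m K : ℕ} (hmK : m < K) {hent : ℝ}
    (hlim : Tendsto (fun n : ℕ => Hn P n / n) atTop (nhds hent)) :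
    (Hn P m + (K - m) * hent < Hn P K ↔
      ∃ n : ℕ, m < n ∧ n ≤ K ∧ hent < Hn P n - Hn P (n - 1)) ∧
    ∀ k, K ≤ k + 1 → ¬ IsMarkovOrderLe P k → Hn P m + (K - m) * hent < Hn P K := by
  have hanti := antitone_increment_Hn_of_tendsto hinv hlim
  have hiff := add_mul_lt_iff_exists_increment_gt (le_increment_of_tendsto_div hanti hlim) hmK.le
  refine ⟨hiff, fun k hKk hMarkov => hiff.2 ⟨K, hmK, le_rfl, ?_⟩⟩
  contrapose! hMarkov with hK
  have hkK : Hn P (k + 1) - Hn P k ≤ Hn P (K - 1 + 1) - Hn P (K - 1) := hanti (by omega)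
  rw [Nat.sub_add_cancel (by omega)] at hkK
  exact isMarkovOrderLe_of_increment_le hinv hlim (hkK.trans hK)

theorem stmt17 [Fintype A] (P : Measure (ℕ → A)) [IsProbabilityMeasure P]
    (hinv : MeasurePreserving (shift : (ℕ → A) → (ℕ → A)) P P)
    (K : ℕ) (hK : 0 < K) (hKeven : Even K)
    (hent : ℝ)
    (hlim : Tendsto (fun n : ℕ => Hn P n / n) atTop (nhds hent)) :
    (((2 / (K : ℝ)) * Hn P (K / 2) + hent) / 2 < Hn P K / K ↔
      ∃ n : ℕ, K / 2 < n ∧ n ≤ K ∧ hent < Hn P n - Hn P (n - 1)) ∧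
    (¬ IsMarkovOrderLe P K →
      ((2 / (K : ℝ)) * Hn P (K / 2) + hent) / 2 < Hn P K / K) := by
  rw [two_div_mul_add_div_two_lt_div_iff hK hKeven]
  exact (stmt17_general P hinv (Nat.div_lt_self hK one_lt_two) hlim).imp_right
    fun h => h K K.le_succ
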